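/- Let f_0 = x^a y^b in coordinates (x,y) on ℂ² with a, b ≥ 1, and let f_s be a 1-parameter holomorphic deformation of f_0 such that f_s is reduced for s ≠ 0. Then for s small enough, every connected component of the normalization of V(f_s) ∩ B_ε that is homeomorphic to a disc contains at least one point mapping to V(xy), i.e. the number of disc components of the normalization of V(f_s) ∩ B_ε is at most the total intersection number Σ_{p ∈ V(f_s) ∩ V(xy)} I_p(V(xy), V(f_s)). -/

import Mathlib

open CategoryTheory

/-- The singular chain complex of a topological space with rational coefficients, obtained by
applying the free `ℚ`-module functor to the singular simplicial set levelwise and taking the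
alternating face map complex. -/
noncomputable def singularChainComplex (X : TopCat) : ChainComplex (ModuleCat ℚ) ℕ :=
  (AlgebraicTopology.alternatingFaceMapComplex (ModuleCat ℚ)).obj
    (((CategoryTheory.SimplicialObject.whiskering (Type) (ModuleCat ℚ)).obj
      (ModuleCat.free ℚ)).obj (TopCat.toSSet.obj X))

/-- Singular homology with rational coefficients. -/
noncomputable def singularHomologyQ (X : TopCat) (n : ℕ) : ModuleCat ℚ :=
  (singularChainComplex X).homology n

/-- The Euler characteristic of a topological space, as the alternating sum of the ranks of its
rational singular homology in degrees `0`, `1`, `2`.  (For the compact surfaces considered here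
all higher homology vanishes, so this is the usual Euler characteristic.) -/
noncomputable def eulerChar (X : Type) [TopologicalSpace X] : ℤ :=
  ∑ n ∈ Finset.range 3, (-1 : ℤ) ^ n * (Module.finrank ℚ (singularHomologyQ (TopCat.of X) n) : ℤ)

/-- The gluing relation for the Möbius band: `(0, y) ~ (1, 1 - y)` on the unit square. -/
def mobiusRel (p q : unitInterval × unitInterval) : Prop :=
  p.1 = 0 ∧ q.1 = 1 ∧ p.2 = unitInterval.symm q.2

/-- The Möbius band, as a quotient of the unit square. -/
def MobiusBand : Type := Quot mobiusRel

instance : TopologicalSpace MobiusBand := by unfold MobiusBand; infer_instance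

/-- A surface is orientable iff it contains no embedded Möbius band. -/
def Orientable (S : Type) [TopologicalSpace S] : Prop :=
  ¬ ∃ f : MobiusBand → S, Topology.IsEmbedding f

/-- The standard closed disc. -/
abbrev Disc2 : Type := Metric.closedBall (0 : EuclideanSpace ℝ (Fin 2)) 1

/-!
Parametrize a disc component by `μ = (x, y)` and suppose that neither coordinate vanishes. Then
`x = exp u` on the disc. For small `s` the curve `V(f_s)` misses `ε / 2 ≤ ‖x‖ ≤ ε`, `‖y‖ = ε`, so
by Hurwitz's theorem `x`, and hence `u`, is open over `ε / 2 < ‖x‖ ≤ ε` away from finitely many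
points. The topmost point of the compact set `u(disc)` on a generic vertical line contradicts this,
whence `‖x‖ ≤ ε / 2`, and likewise `‖y‖ ≤ ε / 2`. But a compact piece of a plane curve cannot stay
in the interior of the bidisc.
-/

section

open Filter Topology Set Metric

section Topology

variable {X Y Z : Type*}

theorem eventually_cofinite_forall_eq {u : X → Y} {p : X → Prop} (h : ∀ᶠ t in cofinite, p t) :
    ∀ᶠ c in cofinite, ∀ t, u t = c → p t := by
  refine (Set.Finite.image u h).subset fun c hc => ?_
  obtain ⟨t, rfl, ht⟩ : ∃ t, u t = c ∧ ¬p t := by simpa using hc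
  exact mem_image_of_mem u ht

variable [TopologicalSpace X] [TopologicalSpace Y] [TopologicalSpace Z]

theorem nhdsWithin_range_le_map_of_isClosedMap {ν : X → Z} (hν : IsClosedMap ν) {t : X}
    (ht : ∀ t', ν t' = ν t → t' = t) : 𝓝[range ν] (ν t) ≤ map ν (𝓝 t) := by
  have hfiber : ν ⁻¹' {ν t} = {t} := eq_singleton_iff_unique_mem.2 ⟨rfl, ht⟩
  calc 𝓝[range ν] (ν t) = map ν (comap ν (𝓝 (ν t))) := (Filter.map_comap _ _).symm
    _ ≤ map ν (𝓝 t) := map_mono <| by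
        simpa [hfiber] using isClosedMap_iff_comap_nhds_le.1 hν (y := ν t)

theorem nhdsWithin_preimage_le_map_of_comp {u : X → Y} {q : Y → Z} {g : Z → Y} {B : Set Z} {t : X}
    (hq : ContinuousAt q (u t)) (hg : ∀ᶠ c in 𝓝 (u t), g (q c) = c) (hu : ContinuousAt u t)
    (h : 𝓝[B] (q (u t)) ≤ map (q ∘ u) (𝓝 t)) : 𝓝[q ⁻¹' B] (u t) ≤ map u (𝓝 t) :=
  calc 𝓝[q ⁻¹' B] (u t) = map (g ∘ q) (𝓝[q ⁻¹' B] (u t)) :=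
        ((Filter.map_congr (hg.filter_mono nhdsWithin_le_nhds)).trans Filter.map_id).symm
    _ = map g (map q (𝓝[q ⁻¹' B] (u t))) := Filter.map_map.symm
    _ ≤ map g (𝓝[B] (q (u t))) := map_mono <| tendsto_nhdsWithin_iff.2
        ⟨hq.mono_left nhdsWithin_le_nhds, self_mem_nhdsWithin⟩
    _ ≤ map g (map (q ∘ u) (𝓝 t)) := map_mono h
    _ = map (g ∘ q ∘ u) (𝓝 t) := Filter.map_map
    _ = map u (𝓝 t) := Filter.map_congr (hu.eventually hg)

theorem exists_continuous_exp_comp_eq [SimplyConnectedSpace X] [LocallyPathConnectedSpace X]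
    {g : X → ℂ} (hg : Continuous g) (h0 : ∀ t, g t ≠ 0) :
    ∃ u : X → ℂ, Continuous u ∧ Complex.exp ∘ u = g := by
  obtain ⟨t₀⟩ : Nonempty X := inferInstance
  obtain ⟨u, ⟨-, hu⟩, -⟩ := Complex.isCoveringMapOn_exp.existsUnique_continuousMap_lifts
    ⟨g, hg⟩ (Complex.exp_log (h0 t₀)) h0
  exact ⟨u, map_continuous u, hu⟩

end Topology

section CompactPlaneSets

theorem exists_re_eq_notMem_nhdsWithin {J : Set ℝ} {K : Set ℂ} (hK : IsCompact K) {z₀ : ℂ}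
    (hz₀ : z₀ ∈ K) (hJ : z₀.re ∈ J) : ∃ z ∈ K, z.re = z₀.re ∧ K ∉ 𝓝[Complex.re ⁻¹' J] z := by
  obtain ⟨z, ⟨hzK, hz⟩, hmax⟩ :=
    (hK.inter_right (isClosed_singleton.preimage Complex.continuous_re)).exists_isMaxOn
      ⟨z₀, hz₀, rfl⟩ Complex.continuous_im.continuousOn
  change z.re = z₀.re at hz
  refine ⟨z, hzK, hz, fun hnhds => ?_⟩
  have hup : Tendsto (fun θ : ℝ => z + θ * Complex.I) (𝓝[>] 0) (𝓝[Complex.re ⁻¹' J] z) := by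
    refine tendsto_nhdsWithin_iff.2 ⟨?_, .of_forall fun θ => by simpa [hz] using hJ⟩
    exact (Continuous.tendsto' (by fun_prop) _ _ (by simp)).mono_left nhdsWithin_le_nhds
  obtain ⟨θ, hθK, hθ⟩ := ((hup.eventually hnhds).and self_mem_nhdsWithin).exists
  have hle : (z + θ * Complex.I).im ≤ z.im := hmax ⟨hθK, by simpa using hz⟩
  exact (mem_Ioi.1 hθ).not_ge (by simpa using hle)

theorem notMem_nhdsWithin_re_preimage_of_isCompact {J : Set ℝ} {K : Set ℂ} (hK : IsCompact K)
    (h : ∀ᶠ c in cofinite, c ∈ K → c.re ∈ J → K ∈ 𝓝[Complex.re ⁻¹' J] c) {c : ℂ}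
    (hc : AccPt c.re (𝓟 J)) : K ∉ 𝓝[Complex.re ⁻¹' J] c := by
  intro hKc
  have hline : Tendsto (fun ρ : ℝ => (⟨ρ, c.im⟩ : ℂ)) (𝓝 c.re) (𝓝 c) :=
    Complex.equivRealProdCLM.symm.continuous.tendsto' _ _ rfl |>.comp
      (Continuous.tendsto (by fun_prop : Continuous fun ρ : ℝ => (ρ, c.im)) c.re)
  have hmem : ∀ᶠ ρ in 𝓝[≠] c.re, ρ ∈ J → (⟨ρ, c.im⟩ : ℂ) ∈ K :=
    (hline.eventually (mem_nhdsWithin_iff_eventually.1 hKc)).filter_mono nhdsWithin_le_nhds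
  have hgeneric : ∀ᶠ ρ in 𝓝[≠] c.re, ∀ z : ℂ, z.re = ρ → z ∈ K → z.re ∈ J →
      K ∈ 𝓝[Complex.re ⁻¹' J] z :=
    (eventually_cofinite_forall_eq (u := Complex.re) h).filter_mono (nhdsNE_le_cofinite c.re)
  obtain ⟨ρ, hρJ, hρK, hρ⟩ :=
    ((accPt_iff_frequently_nhdsNE.1 hc).and_eventually (hmem.and hgeneric)).exists
  obtain ⟨z, hzK, hz, hzn⟩ := exists_re_eq_notMem_nhdsWithin hK (hρK hρJ) hρJ
  exact hzn (hρ z hz hzK (hz ▸ hρJ))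

theorem notMem_nhds_of_isCompact {K : Set ℂ} (hK : IsCompact K)
    (h : ∀ᶠ c in cofinite, c ∈ K → K ∈ 𝓝 c) (c : ℂ) : K ∉ 𝓝 c := by
  have hacc : AccPt c.re (𝓟 univ) := by simpa [AccPt] using inferInstanceAs (𝓝[≠] c.re).NeBot
  simpa using notMem_nhdsWithin_re_preimage_of_isCompact (J := univ) hK (by simpa using h) hacc

theorem accPt_exp_preimage_Ioc {r ε a : ℝ} (ha : Real.exp a ∈ Ioc r ε) :
    AccPt a (𝓟 (Real.exp ⁻¹' Ioc r ε)) := by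
  refine NeBot.mono (inferInstanceAs (𝓝[<] a).NeBot)
    (le_inf (nhdsWithin_mono a fun _ hb => ne_of_lt hb) (le_principal_iff.2 ?_))
  filter_upwards [mem_nhdsWithin_of_mem_nhds
    (Real.continuous_exp.continuousAt.eventually (lt_mem_nhds ha.1)), self_mem_nhdsWithin]
    with b hrb hba
  exact ⟨hrb, (Real.exp_le_exp.2 (le_of_lt hba)).trans ha.2⟩

end CompactPlaneSets

section Hurwitz

theorem exists_zero_of_norm_lt_on_sphere {g : ℂ → ℂ} {b : ℂ} {ρ : ℝ} (hρ : 0 < ρ)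
    (hg : DiffContOnCl ℂ g (ball b ρ)) (hlt : ∀ y ∈ sphere b ρ, ‖g b‖ < ‖g y‖) :
    ∃ y ∈ closedBall b ρ, g y = 0 := by
  by_contra! hne
  rw [← closure_ball b hρ.ne'] at hne
  obtain ⟨y, hy, hmax⟩ := Complex.exists_mem_frontier_isMaxOn_norm isBounded_ball
    (nonempty_ball.2 hρ) (hg.inv hne)
  rw [frontier_ball b hρ.ne'] at hy
  have hb := hmax (subset_closure (mem_ball_self hρ))
  have hle : ‖g b‖⁻¹ ≤ ‖g y‖⁻¹ := by simpa using hb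
  have hpos : 0 < ‖g b‖ := norm_pos_iff.2 (hne b (subset_closure (mem_ball_self hρ)))
  exact (hlt y hy).not_ge ((inv_le_inv₀ hpos (hpos.trans (hlt y hy))).1 hle)

theorem nhds_le_map_fst_zeros {P : Type*} [TopologicalSpace P] {f : P × ℂ → ℂ}
    (hf : Continuous f) (hslice : ∀ a, Differentiable ℂ fun y => f (a, y)) {p : P × ℂ}
    (hp : f p = 0) (hne : ∃ y, f (p.1, y) ≠ 0) :
    𝓝 p.1 ≤ map Prod.fst (𝓝[{z | f z = 0}] p) := by
  obtain ⟨a, b⟩ := p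
  refine le_map fun s hs => ?_
  obtain ⟨U, hU, W, hW, hUW⟩ := mem_nhds_prod_iff.1 (mem_nhdsWithin_iff_eventually.1 hs)
  have hiso : ∀ᶠ y in 𝓝 b, y ≠ b → f (a, y) ≠ 0 := by
    have han : AnalyticOnNhd ℂ (fun y => f (a, y)) univ :=
      (hslice a).differentiableOn.analyticOnNhd isOpen_univ
    refine eventually_nhdsWithin_iff.1
      ((han b trivial).eventually_eq_zero_or_eventually_ne_zero.resolve_left fun h0 => ?_)
    obtain ⟨y, hy⟩ := hne
    exact hy (han.eqOn_zero_of_preconnected_of_eventuallyEq_zero isPreconnected_univ trivial h0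
      (mem_univ y))
  obtain ⟨ρ, hρ, hball⟩ := nhds_basis_closedBall.mem_iff.1 (inter_mem hW hiso)
  have hlt : ∀ᶠ x in 𝓝 a, ∀ y ∈ sphere b ρ, ‖f (x, b)‖ < ‖f (x, y)‖ := by
    refine (isCompact_sphere b ρ).eventually_forall_of_forall_eventually fun y hy => ?_
    have hay : f (a, y) ≠ 0 := (hball (sphere_subset_closedBall hy)).2 (ne_of_mem_sphere hy hρ.ne')
    exact ContinuousAt.eventually_lt (f := fun z : P × ℂ => ‖f (z.1, b)‖)
      (g := fun z => ‖f (z.1, z.2)‖) (by fun_prop) (by fun_prop) (by simpa [hp] using hay)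
  filter_upwards [hlt, hU] with x hx hxU
  obtain ⟨y, hy, hy0⟩ := exists_zero_of_norm_lt_on_sphere hρ (hslice x).diffContOnCl hx
  exact ⟨(x, y), hUW ⟨hxU, (hball hy).1⟩ hy0, rfl⟩

end Hurwitz

section BidiscCurve

/-- The part of the plane curve `f = 0` in the closed ball of radius `ε` about the origin. As
`ℂ × ℂ` carries the sup norm, this ball is a bidisc. -/
def bidiscCurve (f : ℂ × ℂ → ℂ) (ε : ℝ) : Set (ℂ × ℂ) :=
  {z | z ∈ closedBall 0 ε ∧ f z = 0}

variable {f : ℂ × ℂ → ℂ} {ε r : ℝ}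

theorem swap_mem_bidiscCurve {z : ℂ × ℂ} :
    z.swap ∈ bidiscCurve f ε ↔ z ∈ bidiscCurve (f ∘ Prod.swap) ε := by
  simp [bidiscCurve, Prod.norm_def, and_comm]

theorem nhdsWithin_fst_le_map_bidiscCurve (hf : Differentiable ℂ f) {z : ℂ × ℂ}
    (hz : z ∈ bidiscCurve f ε) (hlt : ‖z.2‖ < ε) (hne : ∃ y, f (z.1, y) ≠ 0) :
    𝓝[closedBall 0 ε] z.1 ≤ map Prod.fst (𝓝[bidiscCurve f ε] z) := by
  have hball : ∀ᶠ w : ℂ × ℂ in 𝓝 z, ‖w.2‖ < ε :=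
    continuous_snd.norm.continuousAt.eventually_lt continuousAt_const hlt
  calc 𝓝 z.1 ⊓ 𝓟 (closedBall 0 ε)
      ≤ map Prod.fst (𝓝[{w | f w = 0}] z) ⊓ 𝓟 (closedBall 0 ε) :=
        inf_le_inf_right _ <|
          nhds_le_map_fst_zeros hf.continuous (fun a => by fun_prop) hz.2 hne
    _ = map Prod.fst (𝓝[{w | f w = 0}] z ⊓ 𝓟 (Prod.fst ⁻¹' closedBall 0 ε)) := by
        rw [← Filter.push_pull, comap_principal]
    _ ≤ map Prod.fst (𝓝[bidiscCurve f ε] z) := by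
        refine map_mono (le_inf (inf_le_left.trans inf_le_left) (le_principal_iff.2 ?_))
        filter_upwards [mem_inf_of_left (mem_inf_of_left hball),
          mem_inf_of_left (mem_inf_of_right (mem_principal_self _)),
          mem_inf_of_right (mem_principal_self _)] with w hw2 hw hw1
        exact ⟨by simpa [Prod.norm_def] using ⟨mem_closedBall_zero_iff.1 hw1, hw2.le⟩, hw⟩

theorem eventually_ne_zero_of_norm_snd_eq {P : Type*} [TopologicalSpace P] {p₀ : P}
    {F : P → ℂ × ℂ → ℂ} (hF : Continuous (Function.uncurry F))
    (hF0 : ∀ z, F p₀ z = 0 → z.1 = 0 ∨ z.2 = 0) (hr : 0 < r) (hε : 0 < ε) :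
    ∀ᶠ s in 𝓝 p₀, ∀ x y : ℂ, ‖x‖ ∈ Icc r ε → ‖y‖ = ε → F s (x, y) ≠ 0 := by
  have hK : IsCompact ((closedBall (0 : ℂ) ε \ ball 0 r) ×ˢ sphere (0 : ℂ) ε) :=
    ((isCompact_closedBall 0 ε).diff isOpen_ball).prod (isCompact_sphere 0 ε)
  have hne : ∀ᶠ s in 𝓝 p₀, ∀ z ∈ (closedBall (0 : ℂ) ε \ ball 0 r) ×ˢ sphere (0 : ℂ) ε,
      F s z ≠ 0 := by
    refine hK.eventually_forall_of_forall_eventually fun z hz =>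
      hF.continuousAt.eventually_ne fun h0 => ?_
    rcases hF0 z h0 with hx | hy
    · exact hz.1.2 (by simpa [hx] using hr)
    · exact ne_zero_of_mem_sphere hε.ne' ⟨z.2, hz.2⟩ hy
  filter_upwards [hne] with s hs x y hx hy
  exact hs (x, y) ⟨by simpa using hx.symm, by simpa using hy⟩

end BidiscCurve

section CofinitelyOpen

variable {X Y Z : Type*} [TopologicalSpace X] [TopologicalSpace Y] [TopologicalSpace Z]

/-- A continuous map into a set `C` which is open onto `C` at all but finitely many points, such
as a normalization of a curve `C` restricted to a connected component. -/
structure IsCofinitelyOpenInto (μ : X → Z) (C : Set Z) : Prop where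
  continuous : Continuous μ
  mem : ∀ t, μ t ∈ C
  nhdsWithin_le : ∀ᶠ t in cofinite, 𝓝[C] (μ t) ≤ map μ (𝓝 t)

namespace IsCofinitelyOpenInto

theorem of_eventually_injective [CompactSpace X] [T2Space Z] {ν : X → Z} (hν : Continuous ν)
    (hinj : ∀ᶠ t in cofinite, ∀ t', ν t' = ν t → t' = t) :
    IsCofinitelyOpenInto ν (range ν) where
  continuous := hν
  mem := mem_range_self
  nhdsWithin_le := hinj.mono fun _ => nhdsWithin_range_le_map_of_isClosedMap hν.isClosedMap

theorem comp_isOpenEmbedding {μ : X → Z} {C : Set Z} (h : IsCofinitelyOpenInto μ C) {i : Y → X}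
    (hi : IsOpenEmbedding i) : IsCofinitelyOpenInto (μ ∘ i) C where
  continuous := h.continuous.comp hi.continuous
  mem t := h.mem (i t)
  nhdsWithin_le := (hi.injective.tendsto_cofinite.eventually h.nhdsWithin_le).mono fun t ht => by
    rwa [← map_map, hi.map_nhds_eq]

variable {f : ℂ × ℂ → ℂ} {ε r : ℝ} {μ : X → ℂ × ℂ}

theorem swap (h : IsCofinitelyOpenInto μ (bidiscCurve f ε)) :
    IsCofinitelyOpenInto (Prod.swap ∘ μ) (bidiscCurve (f ∘ Prod.swap) ε) where
  continuous := continuous_swap.comp h.continuous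
  mem t := swap_mem_bidiscCurve.1 (h.mem t)
  nhdsWithin_le := h.nhdsWithin_le.mono fun t ht => by
    have hpre : Prod.swap ⁻¹' bidiscCurve f ε = bidiscCurve (f ∘ Prod.swap) ε :=
      Set.ext fun _ => swap_mem_bidiscCurve
    rw [← hpre]
    exact nhdsWithin_preimage_le_map_of_comp (g := Prod.swap) continuous_swap.continuousAt
      (.of_forall Prod.swap_swap) (continuous_swap.comp h.continuous).continuousAt ht

theorem nhdsWithin_fst_le (h : IsCofinitelyOpenInto μ (bidiscCurve f ε))
    (hf : Differentiable ℂ f) : ∀ᶠ t in cofinite, ‖(μ t).2‖ < ε → (∃ y, f ((μ t).1, y) ≠ 0) →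
      𝓝[closedBall 0 ε] (μ t).1 ≤ map (Prod.fst ∘ μ) (𝓝 t) :=
  h.nhdsWithin_le.mono fun t ht hlt hne =>
    (nhdsWithin_fst_le_map_bidiscCurve hf (h.mem t) hlt hne).trans
      ((map_mono ht).trans_eq Filter.map_map)

theorem nhdsWithin_log_fst_le (h : IsCofinitelyOpenInto μ (bidiscCurve f ε))
    (hf : Differentiable ℂ f) (hr : ∀ x y : ℂ, ‖x‖ ∈ Icc r ε → ‖y‖ = ε → f (x, y) ≠ 0)
    {u : X → ℂ} (hu : Continuous u) (hexp : Complex.exp ∘ u = Prod.fst ∘ μ) :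
    ∀ᶠ t in cofinite, Real.exp (u t).re ∈ Ioc r ε →
      𝓝[Complex.re ⁻¹' (Real.exp ⁻¹' Ioc r ε)] (u t) ≤ map u (𝓝 t) := by
  filter_upwards [h.nhdsWithin_fst_le hf] with t ht hut
  have hxt : Complex.exp (u t) = (μ t).1 := congrFun hexp t
  have hx : ‖(μ t).1‖ ∈ Icc r ε := by
    rw [← hxt, Complex.norm_exp]
    exact Ioc_subset_Icc_self hut
  have hε : 0 ≤ ε := (norm_nonneg _).trans hx.2
  have hy : ‖(μ t).2‖ < ε :=
    ((norm_snd_le _).trans (mem_closedBall_zero_iff.1 (h.mem t).1)).lt_of_ne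
      fun hy => hr _ _ hx hy (h.mem t).2
  have hline : ∃ y, f ((μ t).1, y) ≠ 0 := ⟨ε, hr _ _ hx (by simp [abs_of_nonneg hε])⟩
  refine (nhdsWithin_mono (u t) fun c hc => ?_).trans
    (nhdsWithin_preimage_le_map_of_comp (B := closedBall 0 ε)
      Complex.continuous_exp.continuousAt
      ((Complex.hasStrictDerivAt_exp (u t)).eventually_left_inverse (Complex.exp_ne_zero _))
      hu.continuousAt (by simpa only [hexp, hxt] using ht hy hline))
  simpa [Complex.norm_exp] using hc.2

theorem norm_fst_apply_le [CompactSpace X] [T1Space X] [∀ t : X, (𝓝[≠] t).NeBot]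
    (h : IsCofinitelyOpenInto μ (bidiscCurve f ε)) (hf : Differentiable ℂ f)
    (hr : ∀ x y : ℂ, ‖x‖ ∈ Icc r ε → ‖y‖ = ε → f (x, y) ≠ 0)
    {u : X → ℂ} (hu : Continuous u) (hexp : Complex.exp ∘ u = Prod.fst ∘ μ) (t : X) :
    ‖(μ t).1‖ ≤ r := by
  by_contra! hlt
  have hopen := h.nhdsWithin_log_fst_le hf hr hu hexp
  have hgeneric : ∀ᶠ c in cofinite, c ∈ range u → c.re ∈ Real.exp ⁻¹' Ioc r ε →
      range u ∈ 𝓝[Complex.re ⁻¹' (Real.exp ⁻¹' Ioc r ε)] c := by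
    filter_upwards [eventually_cofinite_forall_eq (u := u) hopen]
    rintro _ hc ⟨t', rfl⟩ hJ
    exact hc t' rfl hJ range_mem_map
  obtain ⟨t', hlt', ht'⟩ : ∃ t', r < ‖(μ t').1‖ ∧ (Real.exp (u t').re ∈ Ioc r ε →
      𝓝[Complex.re ⁻¹' (Real.exp ⁻¹' Ioc r ε)] (u t') ≤ map u (𝓝 t')) :=
    ((infinite_of_mem_nhds t
      ((continuous_fst.comp h.continuous).norm.continuousAt.eventually
        (lt_mem_nhds hlt))).frequently_cofinite.and_eventually hopen).exists
  have hJ : Real.exp (u t').re ∈ Ioc r ε := by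
    rw [← Complex.norm_exp, ← Function.comp_apply (f := Complex.exp), hexp]
    exact ⟨hlt', (norm_fst_le _).trans (mem_closedBall_zero_iff.1 (h.mem t').1)⟩
  exact notMem_nhdsWithin_re_preimage_of_isCompact (isCompact_range hu) hgeneric
    (accPt_exp_preimage_Ioc hJ) (ht' hJ range_mem_map)

theorem eventually_exists_ne_zero [CompactSpace X]
    (h : IsCofinitelyOpenInto μ (bidiscCurve f ε)) (hlt : ∀ t, ‖μ t‖ < ε) :
    ∀ᶠ t in cofinite, ∃ y, f ((μ t).1, y) ≠ 0 := by
  filter_upwards [h.nhdsWithin_le] with t ht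
  by_contra! hline
  generalize hx : (μ t).1 = x at hline
  have hopen : ∀ t', (μ t').1 = x → 𝓝[bidiscCurve f ε] (μ t') ≤ map μ (𝓝 t') →
      (fun y => (x, y)) ⁻¹' range μ ∈ 𝓝 (μ t').2 := by
    intro t' hx ht'
    have hμ : (x, (μ t').2) = μ t' := Prod.ext hx.symm rfl
    have hcont : Tendsto (fun y => (x, y)) (𝓝 (μ t').2) (𝓝 (μ t')) :=
      (Continuous.prodMk_right x).tendsto' _ _ hμ
    have hcurve : Tendsto (fun y => (x, y)) (𝓝 (μ t').2) (𝓝[bidiscCurve f ε] (μ t')) := by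
      refine tendsto_nhdsWithin_iff.2 ⟨hcont, ?_⟩
      filter_upwards [hcont.eventually
        (isOpen_ball.mem_nhds (mem_ball_zero_iff.2 (hlt t')))] with y hy
      exact ⟨ball_subset_closedBall hy, hline y⟩
    exact hcurve (ht' range_mem_map)
  have hK : IsCompact ((fun y => (x, y)) ⁻¹' range μ) :=
    ((isCompact_range h.continuous).image continuous_snd).of_isClosed_subset
      ((isCompact_range h.continuous).isClosed.preimage (.prodMk_right x))
      fun y hy => ⟨(x, y), hy, rfl⟩
  refine notMem_nhds_of_isCompact hK ?_ _ (hopen t hx ht)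
  filter_upwards [eventually_cofinite_forall_eq (u := Prod.snd ∘ μ) h.nhdsWithin_le]
  rintro y hy ⟨t', ht'⟩
  simpa only [ht'] using hopen t' (congrArg Prod.fst ht') (hy t' (congrArg Prod.snd ht'))

theorem exists_le_norm [CompactSpace X] [Infinite X]
    (h : IsCofinitelyOpenInto μ (bidiscCurve f ε)) (hf : Differentiable ℂ f) :
    ∃ t, ε ≤ ‖μ t‖ := by
  by_contra! hlt
  have hopen : ∀ᶠ t in cofinite, range (Prod.fst ∘ μ) ∈ 𝓝 (μ t).1 := by
    filter_upwards [h.nhdsWithin_fst_le hf, h.eventually_exists_ne_zero hlt] with t ht hline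
    rw [← nhdsWithin_eq_nhds.2 (closedBall_mem_nhds_of_mem (mem_ball_zero_iff.2
      ((norm_fst_le (μ t)).trans_lt (hlt t))))]
    exact ht ((norm_snd_le _).trans_lt (hlt t)) hline range_mem_map
  obtain ⟨t, ht⟩ := hopen.exists
  refine notMem_nhds_of_isCompact (isCompact_range (continuous_fst.comp h.continuous)) ?_ _ ht
  filter_upwards [eventually_cofinite_forall_eq (u := Prod.fst ∘ μ) hopen]
  rintro _ hc ⟨t', rfl⟩
  exact hc t' rfl

theorem exists_fst_eq_zero_or_snd_eq_zero [CompactSpace X] [T1Space X] [SimplyConnectedSpace X]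
    [LocallyPathConnectedSpace X] [Nontrivial X]
    (h : IsCofinitelyOpenInto μ (bidiscCurve f ε)) (hf : Differentiable ℂ f) (hrε : r < ε)
    (hfst : ∀ x y : ℂ, ‖x‖ ∈ Icc r ε → ‖y‖ = ε → f (x, y) ≠ 0)
    (hsnd : ∀ x y : ℂ, ‖y‖ ∈ Icc r ε → ‖x‖ = ε → f (x, y) ≠ 0) :
    ∃ t, (μ t).1 = 0 ∨ (μ t).2 = 0 := by
  by_contra! hne
  obtain ⟨u, hu, hexpu⟩ := exists_continuous_exp_comp_eq
    (continuous_fst.comp h.continuous) fun t => (hne t).1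
  obtain ⟨v, hv, hexpv⟩ := exists_continuous_exp_comp_eq
    (continuous_snd.comp h.continuous) fun t => (hne t).2
  have hx := h.norm_fst_apply_le hf hfst hu hexpu
  have hy := h.swap.norm_fst_apply_le (hf.comp (differentiable_snd.prodMk differentiable_fst))
    (fun y x hy hx => hsnd x y hy hx) hv hexpv
  have : Infinite X := PreconnectedSpace.infinite
  obtain ⟨t, ht⟩ := h.exists_le_norm hf
  exact (max_le (hx t) (hy t)).not_gt (hrε.trans_le ht)

end IsCofinitelyOpenInto

end CofinitelyOpen

section Components

theorem eventually_injective_of_injOn {N Z : Type*} {ν : N → Z} (hfib : ∀ p, (ν ⁻¹' {p}).Finite)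
    {S : Set Z} (hS : S.Finite) (hν : InjOn ν (ν ⁻¹' (range ν \ S))) :
    ∀ᶠ t in cofinite, ∀ t', ν t' = ν t → t' = t := by
  filter_upwards [(hS.preimage' fun p _ => hfib p).compl_mem_cofinite] with t ht t' htt'
  exact hν ⟨mem_range_self t', htt' ▸ ht⟩ ⟨mem_range_self t, ht⟩ htt'

theorem simplyConnectedSpace_closedBall {E : Type*} [SeminormedAddCommGroup E] [NormedSpace ℝ E]
    (c : E) {ρ : ℝ} (hρ : 0 ≤ ρ) : SimplyConnectedSpace (closedBall c ρ) :=
  have := (convex_closedBall c ρ).contractibleSpace (nonempty_closedBall.2 hρ)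
  inferInstance

theorem nontrivial_closedBall {E : Type*} [NormedAddCommGroup E] [NormedSpace ℝ E] [Nontrivial E]
    (c : E) {ρ : ℝ} (hρ : 0 < ρ) : (closedBall c ρ).Nontrivial := by
  obtain ⟨v, hv⟩ := (NormedSpace.sphere_nonempty (x := c)).2 hρ.le
  exact ⟨c, mem_closedBall_self hρ.le, v, sphere_subset_closedBall hv,
    (ne_of_mem_sphere hv hρ.ne').symm⟩

universe u

theorem disc_components_meet_axes_general {P : Type*} [TopologicalSpace P] {p₀ : P}
    {F : P → ℂ × ℂ → ℂ} (hF : Continuous (Function.uncurry F))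
    (hslice : ∀ s, Differentiable ℂ (F s)) (hF0 : ∀ z, F p₀ z = 0 → z.1 = 0 ∨ z.2 = 0)
    {ε : ℝ} (hε : 0 < ε) :
    ∀ᶠ s in 𝓝 p₀, ∀ (N : Type u) [TopologicalSpace N] [T1Space N] [CompactSpace N]
      [LocallyPathConnectedSpace N] (ν : N → ℂ × ℂ),
      Continuous ν → range ν = bidiscCurve (F s) ε →
      (∀ᶠ t in cofinite, ∀ t', ν t' = ν t → t' = t) →
      ∀ x : N, SimplyConnectedSpace (connectedComponent x) → Nontrivial (connectedComponent x) →
        ∃ t ∈ connectedComponent x, (ν t).1 = 0 ∨ (ν t).2 = 0 := by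
  have hswap : Continuous (Function.uncurry fun s z => F s (Prod.swap z)) :=
    hF.comp (continuous_fst.prodMk (continuous_swap.comp continuous_snd))
  filter_upwards [eventually_ne_zero_of_norm_snd_eq hF hF0 (half_pos hε) hε,
    eventually_ne_zero_of_norm_snd_eq hswap (fun z hz => (hF0 z.swap hz).symm) (half_pos hε) hε]
    with s hfst hsnd N _ _ _ _ ν hν hrange hinj x _ _
  have hopen := isOpen_connectedComponent (x := x)
  have : CompactSpace (connectedComponent x) :=
    isCompact_iff_compactSpace.1 isClosed_connectedComponent.isCompact
  have : LocallyPathConnectedSpace (connectedComponent x) := hopen.locallyPathConnectedSpace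
  have hcurve := hrange ▸ IsCofinitelyOpenInto.of_eventually_injective hν hinj
  obtain ⟨⟨t, htx⟩, ht⟩ := (hcurve.comp_isOpenEmbedding
    hopen.isOpenEmbedding_subtypeVal).exists_fst_eq_zero_or_snd_eq_zero (hslice s)
      (half_lt_self hε) hfst fun x y hy hx => hsnd y x hy hx
  exact ⟨t, htx, ht⟩

end Components

end

/-- The local normal crossings estimate (Lemma 4.1), qualitative form: for a holomorphic
deformation `f_s` of `f_0 = x^a y^b` which is reduced (square-free at every point of its zero
set) for `s ≠ 0`, and for `s` small enough, every connected component of the normalization of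
`V(f_s) ∩ B_ε` which is homeomorphic to a disc contains a point mapping to `V(xy)`.  Here a
normalization of the curve is a compact surface with boundary mapping continuously and
finite-to-one onto the curve, bijectively away from a finite set. -/
theorem disc_components_meet_axes (a b : ℕ) (ha : 1 ≤ a) (hb : 1 ≤ b)
    (ε : ℝ) (hε : 0 < ε)
    (F : ℂ → ℂ × ℂ → ℂ)
    (hF : AnalyticOnNhd ℂ (fun p : ℂ × (ℂ × ℂ) => F p.1 p.2) Set.univ)
    (hF0 : ∀ z : ℂ × ℂ, F 0 z = z.1 ^ a * z.2 ^ b)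
    (hred : ∀ s : ℂ, s ≠ 0 → ∀ p : ℂ × ℂ, F s p = 0 →
      ¬ ∃ g h : ℂ × ℂ → ℂ, AnalyticAt ℂ g p ∧ AnalyticAt ℂ h p ∧ g p = 0 ∧
        ∀ᶠ z in nhds p, F s z = g z ^ 2 * h z) :
    ∃ s₀ > (0 : ℝ), ∀ s : ℂ, s ≠ 0 → ‖s‖ < s₀ →
      ∀ (N : Type) [TopologicalSpace N] [T2Space N] [CompactSpace N]
        [ChartedSpace (EuclideanHalfSpace 2) N]
        (ν : N → ℂ × ℂ),
        Continuous ν →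
        Set.range ν = {z : ℂ × ℂ | z ∈ Metric.closedBall 0 ε ∧ F s z = 0} →
        (∀ p : ℂ × ℂ, (ν ⁻¹' {p}).Finite) →
        (∃ Fs : Set (ℂ × ℂ), Fs.Finite ∧
          Set.BijOn ν (ν ⁻¹' (Set.range ν \ Fs)) (Set.range ν \ Fs)) →
        ∀ x : N, Nonempty (↥(connectedComponent x) ≃ₜ Disc2) →
          ∃ u ∈ connectedComponent x, (ν u).1 = 0 ∨ (ν u).2 = 0 := by
  have hslice (s : ℂ) : Differentiable ℂ (F s) := fun z =>
    (hF (s, z) trivial).differentiableAt.comp z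
      ((differentiableAt_const s).prodMk differentiableAt_id)
  have haxes (z : ℂ × ℂ) (hz : F 0 z = 0) : z.1 = 0 ∨ z.2 = 0 := by
    rw [hF0, mul_eq_zero] at hz
    exact hz.imp eq_zero_of_pow_eq_zero eq_zero_of_pow_eq_zero
  obtain ⟨s₀, hs₀, hs⟩ := Metric.eventually_nhds_iff.1
    (disc_components_meet_axes_general hF.continuous hslice haxes hε)
  refine ⟨s₀, hs₀, fun s _ hlt N _ _ _ _ ν hν hrange hfib ⟨S, hS, hbij⟩ x ⟨e⟩ => ?_⟩
  have := ChartedSpace.locallyPathConnectedSpace (EuclideanHalfSpace 2) N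
  have : SimplyConnectedSpace Disc2 := simplyConnectedSpace_closedBall 0 zero_le_one
  have : Nontrivial Disc2 := (nontrivial_closedBall 0 one_pos).coe_sort
  exact hs (by simpa using hlt) N ν hν hrange (eventually_injective_of_injOn hfib hS hbij.injOn) x
    e.toHomotopyEquiv.simplyConnectedSpace e.toEquiv.nontrivial
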